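/- Let A = ℚ[t₁, t₂, x] ⊗ Λ(v₁,…,v₅, y) with deg t₁ = deg t₂ = deg x = 2, deg v₁ = deg v₂ = deg v₃ = deg v₄ = 3, deg v₅ = 7 and deg y = 9, and let D be the unique derivation of degree +1 on A with D t₁ = D t₂ = D x = 0, D v₁ = D v₂ = D v₃ = 0, D v₄ = t₂², D v₅ = v₁v₂t₁ + t₁⁴ and D y = x⁵ + v₁v₃t₁². Then D ∘ D = 0 and dim_ℚ H(A, D) < ∞. -/

import Mathlib

/-! Write `P = ℚ[t₁, t₂, x]`. The square of `D` is an ordinary derivation that vanishes on the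
generators, hence it is zero.

For finiteness, `D` is `P`-linear, and the algebra `A` is a finite module over the Noetherian ring
`P`, so the space `ker D` of cocycles is a finitely generated `P`-module. Each polynomial generator
is nilpotent in cohomology: `v₁v₂` and `v₁v₃` have square zero, so `t₂²`, `t₁⁸` and `x¹⁰` are the
coboundaries of `v₄`, of `v₅ (t₁⁴ - v₁v₂t₁)` and of `y (x⁵ - v₁v₃t₁²)`. A `P`-multiple of a cocycle
is therefore, modulo coboundaries, a combination of its multiples by monomials with all exponents
at most `10`, and `H(A, D)` is spanned by finitely many classes
(`finiteDimensional_cohomology_of_nilpotent`). -/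


/- A = ℚ[t₁,t₂,x] ⊗ Λ(v₁,…,v₅,y), deg v = (3,3,3,3,7), deg y = 9; D v₄ = t₂², D v₅ = v₁v₂t₁ + t₁⁴, D y = x⁵ + v₁v₃t₁². -/

open scoped TensorProduct

set_option synthInstance.maxHeartbeats 1000000
set_option maxHeartbeats 1000000

noncomputable section

/-- The free graded-commutative ℚ-algebra `ℚ[t₁,…,t_r] ⊗ Λ(v₁,…,v_n)`:
the tensor product of a polynomial algebra on `r` generators of degree 2 with
an exterior algebra on `n` generators of odd degrees. -/
abbrev FGCA (r n : ℕ) : Type :=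
  MvPolynomial (Fin r) ℚ ⊗[ℚ] ExteriorAlgebra ℚ (Fin n → ℚ)

/-- The degree-2 polynomial generators `tᵢ`. -/
def tg (r n : ℕ) (i : Fin r) : FGCA r n := (MvPolynomial.X i) ⊗ₜ 1

/-- The odd-degree exterior generators `vⱼ`. -/
def vg (r n : ℕ) (j : Fin n) : FGCA r n :=
  1 ⊗ₜ (ExteriorAlgebra.ι ℚ (Pi.single j (1 : ℚ)))

/-- The monomial `t^α · v_S` (with the exterior factors multiplied in increasing
order of index).  These monomials form a ℚ-basis of `FGCA r n`. -/
def gmon (r n : ℕ) (α : Fin r →₀ ℕ) (S : Finset (Fin n)) : FGCA r n :=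
  (MvPolynomial.monomial α (1 : ℚ)) ⊗ₜ
    ((S.sort (· ≤ ·)).map fun j => ExteriorAlgebra.ι ℚ (Pi.single j (1 : ℚ))).prod

/-- The (cohomological) degree of the monomial `t^α · v_S`, where each `tᵢ` has
degree `2` and each `vⱼ` has degree `dv j`. -/
def gdeg (r n : ℕ) (dv : Fin n → ℕ) (α : Fin r →₀ ℕ) (S : Finset (Fin n)) : ℕ :=
  (α.sum fun _ k => 2 * k) + S.sum dv

/-- The homogeneous part of degree `k` of `FGCA r n`: the span of the monomials
of degree `k`. -/
def homog (r n : ℕ) (dv : Fin n → ℕ) (k : ℕ) : Submodule ℚ (FGCA r n) :=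
  Submodule.span ℚ { a | ∃ α S, gdeg r n dv α S = k ∧ a = gmon r n α S }

/-- The graded Leibniz rule for a degree `+1` derivation `D`:
`D(ab) = D(a)·b + (−1)^(deg a) a·D(b)` for homogeneous `a`. -/
def IsLeibniz (r n : ℕ) (dv : Fin n → ℕ) (D : FGCA r n →ₗ[ℚ] FGCA r n) : Prop :=
  ∀ (p : ℕ) (a b : FGCA r n), a ∈ homog r n dv p →
    D (a * b) = D a * b + ((-1 : ℚ) ^ p) • (a * D b)

/-- `D` raises (cohomological) degree by `1`. -/
def RaisesDegByOne (r n : ℕ) (dv : Fin n → ℕ) (D : FGCA r n →ₗ[ℚ] FGCA r n) : Prop :=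
  ∀ (k : ℕ), ∀ a ∈ homog r n dv k, D a ∈ homog r n dv (k + 1)

/-- The cohomology `H(A, D) = ker D / im D` as a ℚ-vector space, realized as the
image of `ker D` in `A ⧸ im D`. -/
abbrev Cohomology (r n : ℕ) (D : FGCA r n →ₗ[ℚ] FGCA r n) : Type :=
  (LinearMap.ker D).map (LinearMap.range D).mkQ

end

/-! ### Generators and degrees -/

section General

variable {r n : ℕ} {d : Fin n → ℕ}

theorem gmon_single_empty (i : Fin r) : gmon r n (Finsupp.single i 1) ∅ = tg r n i := by
  simp [gmon, tg, MvPolynomial.X]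

theorem gmon_zero_singleton (j : Fin n) : gmon r n 0 {j} = vg r n j := by
  simp [gmon, vg]

theorem gmon_zero_empty : gmon r n 0 ∅ = 1 := by
  simp [gmon, Algebra.TensorProduct.one_def]

theorem tg_mem_homog (i : Fin r) : tg r n i ∈ homog r n d 2 :=
  Submodule.subset_span ⟨Finsupp.single i 1, ∅, by simp [gdeg], (gmon_single_empty i).symm⟩

theorem vg_mem_homog (j : Fin n) : vg r n j ∈ homog r n d (d j) :=
  Submodule.subset_span ⟨0, {j}, by simp [gdeg], (gmon_zero_singleton j).symm⟩

theorem one_mem_homog : (1 : FGCA r n) ∈ homog r n d 0 :=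
  Submodule.subset_span ⟨0, ∅, by simp [gdeg], gmon_zero_empty.symm⟩

theorem tg_eq_algebraMap (i : Fin r) :
    tg r n i = algebraMap (MvPolynomial (Fin r) ℚ) (FGCA r n) (MvPolynomial.X i) := rfl

theorem poly_smul_eq (p : MvPolynomial (Fin r) ℚ) (a : FGCA r n) :
    p • a = algebraMap (MvPolynomial (Fin r) ℚ) (FGCA r n) p * a :=
  Algebra.smul_def p a

theorem tg_commute (i : Fin r) (a : FGCA r n) : Commute (tg r n i) a := by
  rw [tg_eq_algebraMap]
  exact Algebra.commutes _ _

theorem vg_mul_self (j : Fin n) : vg r n j * vg r n j = 0 := by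
  simp [vg, Algebra.TensorProduct.tmul_mul_tmul]

theorem vg_mul_swap (i j : Fin n) : vg r n i * vg r n j = (-1 : ℚ) • (vg r n j * vg r n i) := by
  refine (eq_neg_of_add_eq_zero_left ?_).trans (neg_one_smul ℚ _).symm
  simp [vg, Algebra.TensorProduct.tmul_mul_tmul, ← TensorProduct.tmul_add,
    ExteriorAlgebra.ι_add_mul_swap]

theorem vg_mul_vg_sq (i j : Fin n) :
    (vg r n i * vg r n j) * (vg r n i * vg r n j) = 0 := by
  rw [mul_assoc, ← mul_assoc (vg r n j), vg_mul_swap j i, smul_mul_assoc, mul_assoc,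
    vg_mul_self]
  simp

theorem subalgebra_eq_top (S : Subalgebra ℚ (FGCA r n)) (ht : ∀ i, tg r n i ∈ S)
    (hv : ∀ j, vg r n j ∈ S) : S = ⊤ := by
  have hp : S.comap (Algebra.TensorProduct.includeLeft (R := ℚ) (S := ℚ)) = ⊤ := by
    rw [eq_top_iff, ← MvPolynomial.adjoin_range_X, Algebra.adjoin_le_iff]
    rintro _ ⟨i, rfl⟩
    exact ht i
  have he : S.comap (Algebra.TensorProduct.includeRight (R := ℚ)) = ⊤ := by
    rw [eq_top_iff, ← CliffordAlgebra.adjoin_range_ι, Algebra.adjoin_le_iff]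
    rintro _ ⟨m, rfl⟩
    rw [pi_eq_sum_univ' m, map_sum]
    refine sum_mem fun j _ => ?_
    rw [map_smul]
    refine Subalgebra.smul_mem _ ?_ _
    exact hv j
  rw [eq_top_iff]
  rintro a -
  induction a using TensorProduct.induction_on with
  | zero => exact zero_mem _
  | add a b ha hb => exact add_mem ha hb
  | tmul p e =>
    have h1 : p ∈ S.comap (Algebra.TensorProduct.includeLeft (R := ℚ) (S := ℚ)) := hp ▸ trivial
    have h2 : e ∈ S.comap (Algebra.TensorProduct.includeRight (R := ℚ)) := he ▸ trivial
    have h3 := S.mul_mem h1 h2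
    simpa [Algebra.TensorProduct.tmul_mul_tmul] using h3

/-! ### Consequences of the Leibniz rule -/

variable {D : FGCA r n →ₗ[ℚ] FGCA r n}

theorem IsLeibniz.map_one (hL : IsLeibniz r n d D) : D 1 = 0 := by
  simpa using hL 0 1 1 one_mem_homog

/-- The signs cancel in the square of an odd derivation, so `D ∘ D` commutes with left
multiplication by every homogeneous element it kills. -/
theorem IsLeibniz.sq_mul (hL : IsLeibniz r n d D) (hdeg : RaisesDegByOne r n d D) {p : ℕ}
    {a : FGCA r n} (ha : a ∈ homog r n d p) (haD : D (D a) = 0) (b : FGCA r n) :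
    D (D (a * b)) = a * D (D b) := by
  rw [hL p a b ha, map_add, map_smul, hL (p + 1) _ b (hdeg p a ha), hL p a (D b) ha, haD,
    smul_add, smul_smul, ← mul_pow, pow_succ]
  simp [← add_assoc, ← add_smul]

theorem IsLeibniz.sq_eq_zero (hL : IsLeibniz r n d D) (hdeg : RaisesDegByOne r n d D)
    (ht : ∀ i, D (D (tg r n i)) = 0) (hv : ∀ j, D (D (vg r n j)) = 0) : D ∘ₗ D = 0 := by
  let S : Subalgebra ℚ (FGCA r n) :=
    { carrier := {a | ∀ b, D (D (a * b)) = a * D (D b)}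
      mul_mem' := fun {a a'} ha ha' b => by
        rw [mul_assoc, ha, ha', mul_assoc]
      add_mem' := fun {a a'} ha ha' b => by
        rw [add_mul, map_add, map_add, ha, ha', add_mul]
      algebraMap_mem' := fun q b => by
        simp [Algebra.algebraMap_eq_smul_one] }
  have hS : S = ⊤ := subalgebra_eq_top S
    (fun i b => hL.sq_mul hdeg (tg_mem_homog i) (ht i) b)
    (fun j b => hL.sq_mul hdeg (vg_mem_homog j) (hv j) b)
  refine LinearMap.ext fun a => ?_
  have ha : a ∈ S := hS ▸ trivial
  simpa [hL.map_one] using ha 1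

theorem IsLeibniz.map_smul_poly (hL : IsLeibniz r n d D) (ht : ∀ i, D (tg r n i) = 0)
    (p : MvPolynomial (Fin r) ℚ) (a : FGCA r n) : D (p • a) = p • D a := by
  induction p using MvPolynomial.induction_on generalizing a with
  | C q => rw [← MvPolynomial.algebraMap_eq, algebraMap_smul, algebraMap_smul, map_smul]
  | add p q hp hq => rw [add_smul, map_add, hp, hq, add_smul]
  | mul_X p i hp =>
    rw [mul_smul, hp, mul_smul, poly_smul_eq (MvPolynomial.X i), ← tg_eq_algebraMap,
      hL 2 _ a (tg_mem_homog i), ht i, poly_smul_eq (MvPolynomial.X i), ← tg_eq_algebraMap]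
    simp

/-- Left multiplication by `a` sends cocycles to cocycles. No homogeneity of `a` is required. -/
def PreservesCocycles (D : FGCA r n →ₗ[ℚ] FGCA r n) (a : FGCA r n) : Prop :=
  ∀ z, D z = 0 → D (a * z) = 0

theorem PreservesCocycles.mul {a b : FGCA r n} (ha : PreservesCocycles D a)
    (hb : PreservesCocycles D b) : PreservesCocycles D (a * b) := fun z hz => by
  rw [mul_assoc]
  exact ha _ (hb z hz)

theorem PreservesCocycles.sub {a b : FGCA r n} (ha : PreservesCocycles D a)
    (hb : PreservesCocycles D b) : PreservesCocycles D (a - b) := fun z hz => by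
  rw [sub_mul, map_sub, ha z hz, hb z hz, sub_zero]

theorem PreservesCocycles.pow {a : FGCA r n} (ha : PreservesCocycles D a) (k : ℕ) :
    PreservesCocycles D (a ^ k) := by
  induction k with
  | zero => intro z hz; simpa using hz
  | succ k ih => rw [pow_succ]; exact ih.mul ha

theorem IsLeibniz.preservesCocycles (hL : IsLeibniz r n d D) {p : ℕ} {a : FGCA r n}
    (ha : a ∈ homog r n d p) (haD : D a = 0) : PreservesCocycles D a := fun z hz => by
  rw [hL p a z ha, haD, hz]
  simp

/-- If `u + c` is the coboundary of `w` where `c` has square zero and commutes with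
`u`, and if `u - c` preserves cocycles, then for a cocycle `z` the element `w (u - c) z` has
coboundary `(u + c)(u - c) z = u² z`. -/
theorem IsLeibniz.sq_mul_mem_range (hL : IsLeibniz r n d D) {p : ℕ} {w u c : FGCA r n}
    (hw : w ∈ homog r n d p) (hD : D w = u + c) (huc : Commute u c) (hc : c * c = 0)
    (hpres : PreservesCocycles D (u - c)) {z : FGCA r n} (hz : D z = 0) :
    u * u * z ∈ LinearMap.range D := by
  refine ⟨w * ((u - c) * z), ?_⟩
  rw [hL p _ _ hw, hD, hpres z hz, ← mul_assoc, ← huc.mul_self_sub_mul_self_eq, hc]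
  simp

/-! ### Finiteness from nilpotence of the polynomial generators -/

instance finite_exteriorAlgebra : Module.Finite ℚ (ExteriorAlgebra ℚ (Fin n → ℚ)) :=
  Module.Finite.of_basis (Pi.basisFun ℚ (Fin n)).ExteriorAlgebra

/-- If a power of every polynomial generator multiplies cocycles into coboundaries, then the
cohomology is finite-dimensional: it is spanned by the classes `X^α g`, where `g` runs through
generators of the module of cocycles over the polynomial ring and all exponents of `α` are
at most `N`. -/
theorem finiteDimensional_cohomology_of_nilpotent (hL : IsLeibniz r n d D)
    (ht : ∀ i, D (tg r n i) = 0) (N : ℕ)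
    (hN : ∀ i z, D z = 0 → tg r n i ^ N * z ∈ LinearMap.range D) :
    FiniteDimensional ℚ (Cohomology r n D) := by
  have hlin := hL.map_smul_poly ht
  let K : Submodule (MvPolynomial (Fin r) ℚ) (FGCA r n) :=
    { carrier := {a | D a = 0}
      add_mem' := fun {a b} (ha : D a = 0) (hb : D b = 0) => by
        change D (a + b) = 0
        rw [map_add, ha, hb, add_zero]
      zero_mem' := map_zero D
      smul_mem' := fun p a (ha : D a = 0) => by
        change D (p • a) = 0
        rw [hlin, ha, smul_zero] }
  obtain ⟨G, hG⟩ : K.FG := IsNoetherian.noetherian K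
  have hGK : ∀ g ∈ G, D g = 0 := fun g hg => by
    have : g ∈ K := hG ▸ Submodule.subset_span hg
    exact this
  let B : Set (Fin r →₀ ℕ) := Set.Iic (Finsupp.equivFunOnFinite.symm fun _ => N)
  let T : Set (FGCA r n) :=
    Set.image2 (fun α g => MvPolynomial.monomial α (1 : ℚ) • g) B (G : Set (FGCA r n))
  have hT : T.Finite := Set.Finite.image2 _ (Set.finite_Iic _) G.finite_toSet
  have hmon : ∀ g ∈ G, ∀ α : Fin r →₀ ℕ, MvPolynomial.monomial α (1 : ℚ) • g ∈
      Submodule.span ℚ T ⊔ LinearMap.range D := by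
    intro g hg α
    by_cases hα : α ∈ B
    · exact Submodule.mem_sup_left (Submodule.subset_span ⟨α, hα, g, hg, rfl⟩)
    · obtain ⟨i, hi⟩ : ∃ i, N < α i := by
        by_contra! h
        exact hα fun i => by simpa using h i
      have hle : Finsupp.single i N ≤ α := by
        rw [Finsupp.single_le_iff]; exact hi.le
      have hfac : MvPolynomial.monomial α (1 : ℚ) =
          MvPolynomial.X i ^ N * MvPolynomial.monomial (α - Finsupp.single i N) 1 := by
        rw [MvPolynomial.X_pow_eq_monomial, MvPolynomial.monomial_mul, one_mul,
          add_tsub_cancel_of_le hle]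
      refine Submodule.mem_sup_right ?_
      rw [hfac, mul_smul, poly_smul_eq, map_pow, ← tg_eq_algebraMap]
      exact hN i _ (by rw [hlin, hGK g hg, smul_zero])
  have hker : LinearMap.ker D ≤ Submodule.span ℚ T ⊔ LinearMap.range D := by
    intro z hz
    have hzK : z ∈ Submodule.span (MvPolynomial (Fin r) ℚ) (G : Set (FGCA r n)) := by
      rw [hG]; exact hz
    rw [Submodule.mem_span_finset] at hzK
    obtain ⟨f, -, rfl⟩ := hzK
    refine sum_mem fun g hg => ?_
    rw [(f g).as_sum, Finset.sum_smul]
    refine sum_mem fun α _ => ?_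
    have := Submodule.smul_mem _ ((f g).coeff α) (hmon g hg α)
    rwa [← smul_assoc, MvPolynomial.smul_monomial, smul_eq_mul, mul_one] at this
  have hle : (LinearMap.ker D).map (LinearMap.range D).mkQ ≤
      (Submodule.span ℚ T).map (LinearMap.range D).mkQ := by
    refine (Submodule.map_mono hker).trans ?_
    rw [Submodule.map_sup, Submodule.mkQ_map_self, sup_bot_eq]
  have : FiniteDimensional ℚ (Submodule.span ℚ T) := FiniteDimensional.span_of_finite ℚ hT
  exact Submodule.finiteDimensional_of_le hle

end General

noncomputable section

local notation "dv" => (![3, 3, 3, 3, 7, 9] : Fin 6 → ℕ)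
local notation "t₁" => tg 3 6 0
local notation "t₂" => tg 3 6 1
local notation "x" => tg 3 6 2
local notation "v₁" => vg 3 6 0
local notation "v₂" => vg 3 6 1
local notation "v₃" => vg 3 6 2
local notation "v₄" => vg 3 6 3
local notation "v₅" => vg 3 6 4
local notation "y" => vg 3 6 5

theorem stmt_18 (D : FGCA 3 6 →ₗ[ℚ] FGCA 3 6)
    (hLeib : IsLeibniz 3 6 dv D)
    (hdeg : RaisesDegByOne 3 6 dv D)
    (hD0 : D t₁ = (0 : FGCA 3 6))
    (hD1 : D t₂ = (0 : FGCA 3 6))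
    (hD2 : D x = (0 : FGCA 3 6))
    (hD3 : D v₁ = (0 : FGCA 3 6))
    (hD4 : D v₂ = (0 : FGCA 3 6))
    (hD5 : D v₃ = (0 : FGCA 3 6))
    (hD6 : D v₄ = t₂ ^ 2)
    (hD7 : D v₅ = v₁ * v₂ * t₁ + t₁ ^ 4)
    (hD8 : D y = x ^ 5 + v₁ * v₃ * t₁ ^ 2)
    : D ∘ₗ D = 0 ∧ FiniteDimensional ℚ (Cohomology 3 6 D) := by
  have ht : ∀ i, D (tg 3 6 i) = 0 := by
    intro i
    fin_cases i
    exacts [hD0, hD1, hD2]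
  have ct : ∀ i, PreservesCocycles D (tg 3 6 i) := fun i =>
    hLeib.preservesCocycles (tg_mem_homog i) (ht i)
  have c1 := hLeib.preservesCocycles (vg_mem_homog 0) hD3
  have c2 := hLeib.preservesCocycles (vg_mem_homog 1) hD4
  have hpow : ∀ i k, D (tg 3 6 i ^ k) = 0 := fun i k => by
    simpa using (ct i).pow k 1 hLeib.map_one
  -- For `(j, k) = (1, 1)` and `(2, 2)` these are the terms `v₁v₂t₁` of `D v₅` and `v₁v₃t₁²` of `D y`.
  have hsq : ∀ j k, v₁ * vg 3 6 j * t₁ ^ k * (v₁ * vg 3 6 j * t₁ ^ k) = 0 := fun j k => by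
    rw [((tg_commute 0 (v₁ * vg 3 6 j)).pow_left k).mul_mul_mul_comm, vg_mul_vg_sq, zero_mul]
  have c3 := hLeib.preservesCocycles (vg_mem_homog 2) hD5
  have p12 := (c1.mul c2).mul ((ct 0).pow 1)
  have p13 := (c1.mul c3).mul ((ct 0).pow 2)
  -- Writing `t₁` as `t₁ ^ 1` gives `D v₅` the shape of `hsq` and of `D y`.
  rw [← pow_one t₁, ← pow_mul, one_mul, add_comm] at hD7
  refine ⟨hLeib.sq_eq_zero hdeg (fun i => by rw [ht, map_zero]) ?_,
    finiteDimensional_cohomology_of_nilpotent hLeib ht 10 ?_⟩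
  · intro j
    fin_cases j
    · change D (D v₁) = 0
      rw [hD3, map_zero]
    · change D (D v₂) = 0
      rw [hD4, map_zero]
    · change D (D v₃) = 0
      rw [hD5, map_zero]
    · change D (D v₄) = 0
      rw [hD6, hpow]
    · change D (D v₅) = 0
      rw [hD7, map_add, hpow, c1.mul c2 _ (hpow 0 1), add_zero]
    · change D (D y) = 0
      rw [hD8, map_add, hpow, c1.mul c3 _ (hpow 0 2), add_zero]
  · intro i z hz
    -- The exponents `8`, `2` and `10` are all brought up to `10`.
    fin_cases i
    · change t₁ ^ 10 * z ∈ _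
      have := hLeib.sq_mul_mem_range (vg_mem_homog 4) hD7
        ((tg_commute 0 _).pow_left 4) (hsq 1 1) (((ct 0).pow 4).sub p12)
        ((ct 0).pow 2 z hz)
      rwa [← mul_assoc, ← pow_add, ← pow_add] at this
    · refine ⟨v₄ * (t₂ ^ 8 * z), ?_⟩
      rw [hLeib _ _ _ (vg_mem_homog 3), hD6, (ct 1).pow 8 z hz, ← mul_assoc, ← pow_add]
      simp
    · change x ^ 10 * z ∈ _
      have := hLeib.sq_mul_mem_range (vg_mem_homog 5) hD8
        ((tg_commute 2 _).pow_left 5) (hsq 2 2) (((ct 2).pow 5).sub p13) hz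
      rwa [← pow_add] at this

end
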